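/- arXiv:math/0604399 — 5 statements merged into one kernel-verified Lean document; each statement's English description precedes it below -/
import Mathlib

section
/- Let G be a group, H a normal subgroup of G, and suppose G = G'⟨x_1, …, x_m⟩ for elements x_1, …, x_m ∈ G, where G' = [G,G]. Then for every n ≥ 1, [H,G] = [H,x_1][H,x_2]…[H,x_m]·[H,_n G], meaning: every element of the subgroup [H,G] is a product c_1 c_2 … c_m w with c_i ∈ [H,x_i] = {[h,x_i] : h ∈ H} and w an element of the subgroup [H,_n G]. -/
/-- The set `[H,x] = {h⁻¹x⁻¹hx : h ∈ H}`. -/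
def commSet {G : Type*} [Group G] (H : Subgroup G) (x : G) : Set G :=
  (fun h : G => h⁻¹ * x⁻¹ * h * x) '' (H : Set G)

/-- `[H,G]`: the subgroup generated by all commutators `[h,g] = h⁻¹g⁻¹hg`. -/
def commutatorSubgroupWith {G : Type*} [Group G] (H : Subgroup G) : Subgroup G :=
  Subgroup.closure {x : G | ∃ h ∈ H, ∃ g : G, h⁻¹ * g⁻¹ * h * g = x}

/-- The iterated commutator subgroup `[H,_n G]`: `[H,_1 G] = [H,G]`,
`[H,_{n+1} G] = [[H,_n G], G]`. -/
def iteratedCommutatorWith {G : Type*} [Group G] (H : Subgroup G) : ℕ → Subgroup G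
  | 0 => H
  | n + 1 => commutatorSubgroupWith (iteratedCommutatorWith H n)

instance centerCommGroupInst {Q : Type*} [Group Q] : CommGroup (Subgroup.center Q) :=
  { (inferInstance : Group (Subgroup.center Q)) with
    mul_comm := fun a b => Subtype.ext (Subgroup.mem_center_iff.1 b.2 a) }

theorem cSW_eq {G : Type*} [Group G] (H : Subgroup G) :
    commutatorSubgroupWith H = ⁅H, (⊤ : Subgroup G)⁆ := by
  apply le_antisymm
  · refine (Subgroup.closure_le _).2 ?_
    rintro _ ⟨h, hh, g, rfl⟩
    have := Subgroup.commutator_mem_commutator (H.inv_mem hh) (Subgroup.mem_top g⁻¹)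
    simpa [commutatorElement_def] using this
  · rw [Subgroup.commutator_le]
    intro h hh g _
    refine Subgroup.subset_closure ⟨h⁻¹, H.inv_mem hh, g⁻¹, ?_⟩
    simp [commutatorElement_def]

theorem cSW_normal {G : Type*} [Group G] (H : Subgroup G) (hH : H.Normal) :
    (commutatorSubgroupWith H).Normal := by
  rw [cSW_eq]; infer_instance

theorem iC_normal {G : Type*} [Group G] (H : Subgroup G) (hH : H.Normal) (n : ℕ) :
    (iteratedCommutatorWith H n).Normal := by
  induction n with
  | zero => exact hH
  | succ n ih => exact cSW_normal _ ih

theorem iC_le {G : Type*} [Group G] (H : Subgroup G) (hH : H.Normal) (n : ℕ) :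
    iteratedCommutatorWith H n ≤ H := by
  induction n with
  | zero => exact le_rfl
  | succ n ih =>
    have := iC_normal H hH n
    refine le_trans ?_ ih
    show commutatorSubgroupWith _ ≤ _
    rw [cSW_eq]
    exact Subgroup.commutator_le_left _ _

theorem prod_central {Q : Type*} [Group Q] (m : ℕ) (a : Fin m → Q) (b : Fin m → Subgroup.center Q) :
    (List.ofFn (fun i => (b i : Q) * a i)).prod = (List.ofFn a).prod * ((∏ i, b i : Subgroup.center Q) : Q) := by
  induction m with
  | zero => simp
  | succ m ih =>
    rw [List.ofFn_succ, List.prod_cons, ih, Fin.prod_univ_succ, List.ofFn_succ, List.prod_cons]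
    have h := Subgroup.mem_center_iff.1 (b 0).2
    rw [Subgroup.coe_mul, ← h (a 0), ← mul_assoc, ← mul_assoc]
    congr 1
    rw [mul_assoc, ← h, ← mul_assoc]

theorem key {G : Type*} [Group G] (K L : Subgroup G) (hK : K.Normal) [hL : L.Normal]
    (hKL : ∀ k ∈ commutatorSubgroupWith K, (QuotientGroup.mk' L k) ∈ Subgroup.center (G ⧸ L))
    (m : ℕ) (x : Fin m → G)
    (hgen : commutatorSubgroupWith (⊤ : Subgroup G) ⊔ Subgroup.closure (Set.range x) = ⊤)
    (w : G) (hw : w ∈ commutatorSubgroupWith K) :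
    ∃ (k : Fin m → K) (b : Fin m → Subgroup.center (G ⧸ L)),
      (∀ i, (b i : G ⧸ L) = QuotientGroup.mk' L ((k i : G)⁻¹ * (x i)⁻¹ * k i * x i)) ∧
      QuotientGroup.mk' L w = ((∏ i, b i : Subgroup.center (G ⧸ L)) : G ⧸ L) := by
  have hc : ∀ (k : K) (g : G), (k : G)⁻¹ * g⁻¹ * k * g ∈ commutatorSubgroupWith K :=
    fun k g => Subgroup.subset_closure ⟨k, k.2, g, rfl⟩
  let f : G → K →* Subgroup.center (G ⧸ L) := fun g =>
    MonoidHom.mk' (fun k => ⟨_, hKL _ (hc k g)⟩) (by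
      intro a b
      apply Subtype.ext
      have h := Subgroup.mem_center_iff.1 (hKL _ (hc a g)) (QuotientGroup.mk' L (b : G)⁻¹)
      have e : ((a * b : K) : G)⁻¹ * g⁻¹ * (a * b : K) * g
        = ((b : G)⁻¹ * ((a : G)⁻¹ * g⁻¹ * a * g)) * (g⁻¹ * b * g) := by
          simp only [Subgroup.coe_mul]; group
      show QuotientGroup.mk' L _ = QuotientGroup.mk' L _ * QuotientGroup.mk' L _
      rw [e, map_mul, map_mul _ (b : G)⁻¹, h, ← map_mul, ← map_mul, ← map_mul]
      congr 1; group)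
  have hf : ∀ g k, ((f g k : Subgroup.center (G ⧸ L)) : G ⧸ L)
      = QuotientGroup.mk' L ((k : G)⁻¹ * g⁻¹ * k * g) := fun _ _ => rfl
  let Φ : G →* (K →* Subgroup.center (G ⧸ L)) := MonoidHom.mk' f (by
    intro a b
    ext k
    rw [MonoidHom.mul_apply, Subgroup.coe_mul, hf, hf, hf]
    have h := Subgroup.mem_center_iff.1 (hKL _ (hc k a)) (QuotientGroup.mk' L b)
    have e : (k : G)⁻¹ * (a * b)⁻¹ * k * (a * b)
        = ((k : G)⁻¹ * b⁻¹ * k) * (((k : G)⁻¹ * a⁻¹ * k * a) * b) := by group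
    rw [e, map_mul, map_mul _ _ b, ← h, ← map_mul, ← map_mul, ← map_mul]
    have h2 := Subgroup.mem_center_iff.1 (hKL _ (hc k a)) (QuotientGroup.mk' L ((k : G)⁻¹ * b⁻¹ * k * b))
    rw [map_mul _ ((k : G)⁻¹ * a⁻¹ * k * a), ← h2, ← map_mul]
    congr 1; group)
  let F : (Fin m → K) →* Subgroup.center (G ⧸ L) :=
    ∏ i, (f (x i)).comp (Pi.evalMonoidHom (fun _ => K) i)
  have hF : ∀ k, F k = ∏ i, f (x i) (k i) := by
    intro k; simp [F, MonoidHom.finsetProd_apply]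
  let T : Subgroup (K →* Subgroup.center (G ⧸ L)) :=
    { carrier := {φ | ∀ k, φ k ∈ F.range}
      one_mem' := fun k => one_mem _
      mul_mem' := fun ha hb k => mul_mem (ha k) (hb k)
      inv_mem' := fun ha k => inv_mem (ha k) }
  have hT : (⊤ : Subgroup G) ≤ T.comap Φ := by
    rw [← hgen]
    refine sup_le ((Subgroup.closure_le _).2 ?_) ((Subgroup.closure_le _).2 ?_)
    · rintro _ ⟨h, -, g, rfl⟩
      show Φ _ ∈ T
      have : Φ (h⁻¹ * g⁻¹ * h * g) = 1 := by
        rw [map_mul, map_mul, map_mul, map_inv, map_inv, mul_assoc, ← mul_inv, inv_mul_cancel]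
      rw [this]; exact one_mem _
    · rintro _ ⟨i, rfl⟩
      intro k
      refine ⟨Pi.mulSingle i k, ?_⟩
      rw [hF, Finset.prod_eq_single i]
      · rw [Pi.mulSingle_eq_same]; rfl
      · intro j _ hj
        rw [Pi.mulSingle_eq_of_ne hj, map_one]
      · simp
  have hle : commutatorSubgroupWith K ≤
      (F.range.map (Subgroup.center (G ⧸ L)).subtype).comap (QuotientGroup.mk' L) := by
    refine (Subgroup.closure_le _).2 ?_
    rintro _ ⟨k, hk, g, rfl⟩
    exact ⟨f g ⟨k, hk⟩, hT (Subgroup.mem_top g) ⟨k, hk⟩, rfl⟩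
  obtain ⟨_, ⟨k, rfl⟩, hk⟩ := hle hw
  refine ⟨k, fun i => f (x i) (k i), fun i => rfl, ?_⟩
  rw [← hF]; exact hk.symm

/-- **Lemma 2.4.** If `H ◁ G` and `G = G'⟨x₁,…,x_m⟩` then for every `n ≥ 1` every
element of `[H,G]` is a product `c₁ ⋯ c_m w` with `cᵢ ∈ [H,xᵢ]` and
`w ∈ [H,_n G]`. -/
theorem nilp_comm {G : Type*} [Group G] (H : Subgroup G) (hH : H.Normal)
    (m : ℕ) (x : Fin m → G)
    (hgen : commutatorSubgroupWith (⊤ : Subgroup G) ⊔ Subgroup.closure (Set.range x) = ⊤)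
    (n : ℕ) (hn : 1 ≤ n) :
    ∀ g ∈ commutatorSubgroupWith H,
      ∃ (c : Fin m → G) (w : G),
        (∀ i, c i ∈ commSet H (x i)) ∧ w ∈ iteratedCommutatorWith H n ∧
          (List.ofFn c).prod * w = g := by

  induction n, hn using Nat.le_induction with
  | base =>
    intro g hg
    refine ⟨fun _ => 1, g, fun i => ⟨1, H.one_mem, by simp⟩, hg, by simp⟩
  | succ n hn ih =>
    intro g hg
    obtain ⟨c, w, hc, hw, rfl⟩ := ih g hg
    obtain ⟨p, rfl⟩ : ∃ p, n = p + 1 := ⟨n - 1, by omega⟩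
    have hL : (iteratedCommutatorWith H (p + 1 + 1)).Normal := iC_normal H hH _
    have hKL : ∀ k ∈ commutatorSubgroupWith (iteratedCommutatorWith H p),
        (QuotientGroup.mk' (iteratedCommutatorWith H (p + 1 + 1)) k) ∈
          Subgroup.center (G ⧸ iteratedCommutatorWith H (p + 1 + 1)) := by
      intro k hk
      rw [Subgroup.mem_center_iff]
      intro q
      obtain ⟨q, rfl⟩ := QuotientGroup.mk'_surjective _ q
      rw [← map_mul, ← map_mul]
      apply QuotientGroup.eq.2
      have : k⁻¹ * q⁻¹ * k * q ∈ iteratedCommutatorWith H (p + 1 + 1) :=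
        Subgroup.subset_closure ⟨k, hk, q, rfl⟩
      have h2 := inv_mem this
      have h3 : (q * k)⁻¹ * (k * q) = k⁻¹ * q⁻¹ * k * q := by group
      rw [h3]; exact this
    obtain ⟨k, b, hb, hwb⟩ := key _ (iteratedCommutatorWith H (p + 1 + 1)) (iC_normal H hH p)
      hKL m x hgen w hw
    choose h hhH hhc using hc
    have hhc : ∀ i, (h i)⁻¹ * (x i)⁻¹ * h i * x i = c i := hhc
    let c' : Fin m → G := fun i => (k i * h i : G)⁻¹ * (x i)⁻¹ * (k i * h i) * x i
    have hc' : ∀ i, QuotientGroup.mk' (iteratedCommutatorWith H (p + 1 + 1)) (c' i)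
        = b i * QuotientGroup.mk' (iteratedCommutatorWith H (p + 1 + 1)) (c i) := by
      intro i
      have hz := Subgroup.mem_center_iff.1 (b i).2
        (QuotientGroup.mk' (iteratedCommutatorWith H (p + 1 + 1)) (h i)⁻¹)
      have e : c' i = ((h i)⁻¹ * ((k i : G)⁻¹ * (x i)⁻¹ * k i * x i)) *
          ((x i)⁻¹ * h i * x i) := by
        simp only [c']; group
      rw [e, map_mul, map_mul _ (h i)⁻¹, ← hb, hz, mul_assoc, ← map_mul, ← hhc]
      congr 2; group
    have hprod : QuotientGroup.mk' (iteratedCommutatorWith H (p + 1 + 1)) (List.ofFn c').prod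
        = QuotientGroup.mk' (iteratedCommutatorWith H (p + 1 + 1)) ((List.ofFn c).prod * w) := by
      rw [map_mul, hwb, map_list_prod, map_list_prod, List.map_ofFn, List.map_ofFn,
        ← prod_central]
      congr 2
      funext i
      exact hc' i
    refine ⟨c', (List.ofFn c').prod⁻¹ * ((List.ofFn c).prod * w), ?_, ?_, by group⟩
    · intro i
      exact ⟨k i * h i, H.mul_mem (iC_le H hH p (k i).2) (hhH i), rfl⟩
    · exact QuotientGroup.eq.1 hprod
end

section
/- Let D be a natural number such that every finite quasisimple group S satisfies S = c(S,S)^{*D}, i.e., every element of S is a product of D commutators. Then every finite quasi-semisimple group Q satisfies Q = c(Q,Q)^{*D}: every element of Q is a product of D commutators [x,y] with x, y ∈ Q. -/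
/-- A finite group `S` is quasisimple if `S = [S,S]` and `S/Z(S)` is a non-abelian
simple group. -/
def IsQuasisimple (S : Type*) [Group S] : Prop :=
  ⁅(⊤ : Subgroup S), (⊤ : Subgroup S)⁆ = ⊤ ∧
    IsSimpleGroup (S ⧸ Subgroup.center S) ∧
    ∃ a b : S ⧸ Subgroup.center S, a * b ≠ b * a

/-- A group `Q` is quasi-semisimple if `Q = [Q,Q]` and `Q/Z(Q)` is isomorphic to a
direct product of non-abelian simple groups. -/
def IsQuasiSemisimple (Q : Type*) [Group Q] : Prop :=
  ⁅(⊤ : Subgroup Q), (⊤ : Subgroup Q)⁆ = ⊤ ∧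
    ∃ (ι : Type) (T : ι → Type) (instT : ∀ i, Group (T i)),
      (∀ i, letI := instT i; IsSimpleGroup (T i) ∧ ∃ a b : T i, a * b ≠ b * a) ∧
      (letI := instT; Nonempty ((Q ⧸ Subgroup.center Q) ≃* ((i : ι) → T i)))

open scoped commutatorElement

open Subgroup in
lemma qss_aux_comm {Q : Type} [Group Q] {N M : Subgroup Q} (h : N ≤ M ⊔ Subgroup.center Q) :
    ⁅N, N⁆ ≤ ⁅M, M⁆ := by
  rw [Subgroup.commutator_le]
  intro a ha b hb
  obtain ⟨m, hm, z, hz, rfl⟩ := Subgroup.mem_sup_of_normal_right.1 (h ha)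
  obtain ⟨m', hm', z', hz', rfl⟩ := Subgroup.mem_sup_of_normal_right.1 (h hb)
  rw [Subgroup.mem_center_iff] at hz hz'
  have : ⁅m * z, m' * z'⁆ = ⁅m, m'⁆ := by
    have e1 : ⁅m * z, m' * z'⁆ = m * (z * (m' * z')) * z⁻¹ * m⁻¹ * (m' * z')⁻¹ := by
      simp [commutatorElement_def, mul_assoc]
    rw [e1, ← hz]
    have e2 : m * (m' * z' * z) * z⁻¹ * m⁻¹ * (m' * z')⁻¹ = m * m' * (z' * m⁻¹) * z'⁻¹ * m'⁻¹ := by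
      simp [mul_assoc]
    rw [e2, ← hz']
    simp [commutatorElement_def, mul_assoc]
  rw [this]
  exact Subgroup.commutator_mem_commutator hm hm'

lemma qss_aux_perfect {T : Type} [Group T] [IsSimpleGroup T] (h : ∃ a b : T, a * b ≠ b * a) :
    ⁅(⊤ : Subgroup T), (⊤ : Subgroup T)⁆ = ⊤ := by
  obtain ⟨a, b, hab⟩ := h
  rcases Subgroup.Normal.eq_bot_or_eq_top
    (inferInstance : (⁅(⊤ : Subgroup T), (⊤ : Subgroup T)⁆).Normal) with h | h
  · exfalso
    have := Subgroup.commutator_mem_commutator (Subgroup.mem_top a) (Subgroup.mem_top b)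
    rw [h, Subgroup.mem_bot, commutatorElement_eq_one_iff_mul_comm] at this
    exact hab this
  · exact h

lemma qss_aux_center {T : Type} [Group T] [IsSimpleGroup T] (h : ∃ a b : T, a * b ≠ b * a) :
    Subgroup.center T = ⊥ := by
  obtain ⟨a, b, hab⟩ := h
  rcases Subgroup.Normal.eq_bot_or_eq_top
    (inferInstance : (Subgroup.center T).Normal) with h | h
  · exact h
  · exfalso
    have : b ∈ Subgroup.center T := h ▸ Subgroup.mem_top b
    exact hab (Subgroup.mem_center_iff.1 this a)

lemma qss_aux_quasisimple {S T : Type} [Group S] [Group T] [IsSimpleGroup T]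
    (h : ∃ a b : T, a * b ≠ b * a) (hS : ⁅(⊤ : Subgroup S), (⊤ : Subgroup S)⁆ = ⊤)
    (f : S →* T) (hf : Function.Surjective f) (hk : f.ker ≤ Subgroup.center S) :
    IsQuasisimple S := by
  have hk' : Subgroup.center S = f.ker := by
    apply le_antisymm _ hk
    intro z hz
    have : f z ∈ Subgroup.center T := by
      rw [Subgroup.mem_center_iff]
      intro t
      obtain ⟨s, rfl⟩ := hf t
      rw [← map_mul, ← map_mul, Subgroup.mem_center_iff.1 hz s]
    rw [qss_aux_center h] at this
    exact this
  let e : (S ⧸ Subgroup.center S) ≃* T :=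
    (QuotientGroup.quotientMulEquivOfEq hk').trans
      (QuotientGroup.quotientKerEquivOfSurjective f hf)
  refine ⟨hS, e.isSimpleGroup, ?_⟩
  obtain ⟨a, b, hab⟩ := h
  refine ⟨e.symm a, e.symm b, fun hh => hab ?_⟩
  rw [← map_mul, ← map_mul] at hh
  exact e.symm.injective hh

lemma qss_aux_main (D : ℕ)
    (hD : ∀ (S : Type) [Group S] [Finite S], IsQuasisimple S →
      ∀ s : S, ∃ x y : Fin D → S,
        (List.ofFn fun i => (x i)⁻¹ * (y i)⁻¹ * x i * y i).prod = s)
    (Q : Type) [Group Q] [Finite Q]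
    (hQ : ⁅(⊤ : Subgroup Q), (⊤ : Subgroup Q)⁆ = ⊤)
    (ι : Type) [Fintype ι] [DecidableEq ι] (T : ι → Type) [∀ i, Group (T i)]
    [∀ i, IsSimpleGroup (T i)] (hT : ∀ i, ∃ a b : T i, a * b ≠ b * a)
    (p : Q →* ((i : ι) → T i)) (hp : Function.Surjective p) (hk : p.ker = Subgroup.center Q) :
    ∀ g : Q, ∃ x y : Fin D → Q,
      (List.ofFn fun i => (x i)⁻¹ * (y i)⁻¹ * x i * y i).prod = g := by
  let N : ι → Subgroup Q := fun i => (MonoidHom.mulSingle T i).range.comap p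
  let S : ι → Subgroup Q := fun i => ⁅N i, N i⁆
  have hmapN : ∀ i, (N i).map p = (MonoidHom.mulSingle T i).range := fun i =>
    Subgroup.map_comap_eq_self_of_surjective hp _
  have hmapS : ∀ i, (S i).map p = (MonoidHom.mulSingle T i).range := by
    intro i
    rw [Subgroup.map_commutator, hmapN, MonoidHom.range_eq_map, ← Subgroup.map_commutator,
      qss_aux_perfect (hT i)]
  have hsup : ∀ A B : Subgroup Q, A.map p ≤ B.map p → A ≤ B ⊔ Subgroup.center Q := by
    intro A B h
    rw [← hk]
    exact (Subgroup.map_le_map_iff).1 h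
  have hSN : ∀ i, S i ≤ N i := fun i => Subgroup.commutator_le_self _
  have hSperf : ∀ i, ⁅S i, S i⁆ = S i := by
    intro i
    apply le_antisymm (Subgroup.commutator_le_self _)
    exact qss_aux_comm (hsup _ _ (by rw [hmapN, hmapS]))
  have hNN : ∀ i j, i ≠ j → ⁅N i, N j⁆ ≤ Subgroup.center Q := by
    intro i j hij
    rw [Subgroup.commutator_le]
    rintro a ⟨s, hs⟩ b ⟨t, ht⟩
    rw [← hk, MonoidHom.mem_ker, map_commutatorElement, ← hs, ← ht,
      commutatorElement_eq_one_iff_mul_comm]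
    exact Pi.mulSingle_commute hij s t
  have hbot : ∀ A B C : Subgroup Q, ⁅A, B⁆ ≤ Subgroup.center Q → ⁅⁅A, B⁆, C⁆ = ⊥ := by
    intro A B C h
    rw [Subgroup.commutator_eq_bot_iff_le_centralizer]
    exact h.trans (Subgroup.center_le_centralizer _)
  have hSS : ∀ i j, i ≠ j → ⁅S i, N j⁆ = ⊥ := by
    intro i j hij
    exact Subgroup.commutator_commutator_eq_bot_of_rotate (hbot _ _ _ (hNN i j hij))
      (hbot _ _ _ (hNN j i hij.symm))
  have hcomm : Pairwise fun i j => ∀ x y : Q, x ∈ S i → y ∈ S j → Commute x y := by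
    intro i j hij x y hx hy
    have := Subgroup.commutator_mem_commutator hx (hSN j hy)
    rw [hSS i j hij, Subgroup.mem_bot, commutatorElement_eq_one_iff_mul_comm] at this
    exact this
  have hR : (⨆ i, S i) = ⊤ := by
    rw [eq_top_iff, ← hQ]
    refine le_trans (qss_aux_comm (hsup ⊤ (⨆ i, S i) ?_)) (Subgroup.commutator_le_self _)
    intro f _
    apply Subgroup.pi_mem_of_mulSingle_mem
    intro i
    refine Subgroup.map_mono (le_iSup S i) ?_
    rw [hmapS]
    exact ⟨f i, rfl⟩
  have hqs : ∀ i, IsQuasisimple (S i) := by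
    intro i
    refine qss_aux_quasisimple (hT i) ?_ ((Pi.evalMonoidHom T i).comp (p.comp (S i).subtype)) ?_ ?_
    · apply Subgroup.map_injective (S i).subtype_injective
      rw [Subgroup.map_commutator, ← MonoidHom.range_eq_map, Subgroup.range_subtype, hSperf]
    · intro t
      have : MonoidHom.mulSingle T i t ∈ (S i).map p := by rw [hmapS]; exact ⟨t, rfl⟩
      obtain ⟨s, hs, hst⟩ := this
      refine ⟨⟨s, hs⟩, ?_⟩
      simp [hst]
    · rintro ⟨s, hs⟩ h
      obtain ⟨t, ht⟩ := hSN i hs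
      have h' : p s i = 1 := h
      have ht1 : t = 1 := by
        rw [← ht] at h'
        simpa using h'
      have hc : s ∈ Subgroup.center Q := by
        rw [← hk, MonoidHom.mem_ker, ← ht, ht1, map_one]
      rw [Subgroup.mem_center_iff] at hc ⊢
      intro q
      exact Subtype.ext (hc q)
  intro g
  have hg : g ∈ (Subgroup.noncommPiCoprod hcomm).range := by
    rw [Subgroup.noncommPiCoprod_range, hR]; trivial
  obtain ⟨s, rfl⟩ := hg
  choose x y hxy using fun i => hD (S i) (hqs i) (s i)
  refine ⟨fun k => Subgroup.noncommPiCoprod hcomm (fun i => x i k),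
    fun k => Subgroup.noncommPiCoprod hcomm (fun i => y i k), ?_⟩
  have : s = (List.ofFn fun k => (fun i => x i k)⁻¹ * (fun i => y i k)⁻¹ *
      (fun i => x i k) * (fun i => y i k) : List (∀ i, S i)).prod := by
    funext i
    rw [← hxy i]
    refine Eq.trans ?_ (map_list_prod (Pi.evalMonoidHom (fun i => S i) i) _).symm
    rw [List.map_ofFn]
    rfl
  conv_rhs => rw [this]
  rw [map_list_prod, List.map_ofFn]
  congr 2
  funext k
  simp only [Function.comp, map_mul, map_inv]

theorem quasisemisimple_commutator_width (D : ℕ)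
    (hD : ∀ (S : Type) [Group S] [Finite S], IsQuasisimple S →
      ∀ s : S, ∃ x y : Fin D → S,
        (List.ofFn fun i => (x i)⁻¹ * (y i)⁻¹ * x i * y i).prod = s)
    (Q : Type) [Group Q] [Finite Q] (hQ : IsQuasiSemisimple Q) :
    ∀ g : Q, ∃ x y : Fin D → Q,
      (List.ofFn fun i => (x i)⁻¹ * (y i)⁻¹ * x i * y i).prod = g := by
  classical
  obtain ⟨hperf, ι, T, instT, hT, ⟨e⟩⟩ := hQ
  have hs : ∀ i, IsSimpleGroup (T i) := fun i => (hT i).1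
  have hfin : Finite ((i : ι) → T i) := Finite.of_equiv _ e.toEquiv
  have hι : Finite ι := by
    choose a ha using fun i => exists_ne (1 : T i)
    refine Finite.of_injective (fun i => (Pi.mulSingle i (a i) : (i : ι) → T i)) ?_
    intro i j hij
    by_contra hne
    have := congrFun hij i
    simp [Pi.mulSingle_eq_of_ne hne, ha] at this
  have := Fintype.ofFinite ι
  refine qss_aux_main D hD Q hperf ι T (fun i => (hT i).2)
    (e.toMonoidHom.comp (QuotientGroup.mk' (Subgroup.center Q))) ?_ ?_
  · exact e.surjective.comp (QuotientGroup.mk'_surjective _)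
  · ext q
    simp [MonoidHom.mem_ker]
end

section
/- Let G be a finite group, N a normal subgroup of G, M a subgroup of G, y ∈ G, and set D = M ∩ N and v(M;y) = |{a ∈ N : y^a ∈ M}|. If there exists b ∈ N with y^b ∈ M, then for every such b, v(M;y) = |C_N(y)| · |[y^b,N] ∩ D|, where [y^b,N] = {[y^b,n] : n ∈ N} and C_N(y) = {n ∈ N : [n,y]=1}. If no conjugate y^a with a ∈ N lies in M, then v(M;y) = 0. -/
/-- **Lemma 5.2.** Let `N ◁ G` be finite, `M ≤ G`, `y ∈ G`, `D = M ∩ N` and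
`v(M;y) = |{a ∈ N : y^a ∈ M}|`. If `y^b ∈ M` for some `b ∈ N`, then for every such
`b`, `v(M;y) = |C_N(y)| · |[y^b,N] ∩ D|`; and if no `N`-conjugate of `y` lies in
`M`, then `v(M;y) = 0`. -/
theorem conjugates_in_subgroup_count {G : Type*} [Group G] [Finite G]
    (N M : Subgroup G) (hN : N.Normal) (y : G) :
    (∀ b ∈ N, b⁻¹ * y * b ∈ M →
      Nat.card {a : G // a ∈ N ∧ a⁻¹ * y * a ∈ M} =
        Nat.card {n : G // n ∈ N ∧ y * n = n * y} *
          Nat.card {x : G //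
            (∃ n ∈ N, (b⁻¹ * y * b)⁻¹ * n⁻¹ * (b⁻¹ * y * b) * n = x) ∧
              x ∈ M ∧ x ∈ N}) ∧
    ((¬ ∃ b ∈ N, b⁻¹ * y * b ∈ M) →
      Nat.card {a : G // a ∈ N ∧ a⁻¹ * y * a ∈ M} = 0) := by
  constructor
  · intro b hb hz
    rw [← Nat.card_prod]
    symm
    have key : ∀ x : {x : G //
            (∃ n ∈ N, (b⁻¹ * y * b)⁻¹ * n⁻¹ * (b⁻¹ * y * b) * n = x) ∧
              x ∈ M ∧ x ∈ N}, ∃ n ∈ N, (b * n)⁻¹ * y * (b * n) = (b⁻¹ * y * b) * x.1 := by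
      rintro ⟨x, ⟨n, hn, h⟩, -⟩
      refine ⟨n, hn, ?_⟩
      change _ = (b⁻¹ * y * b) * x
      rw [← h]
      group
    choose n hn h using key
    have conj : ∀ c, y * c = c * y → ∀ x, (c * b * n x)⁻¹ * y * (c * b * n x)
        = (b⁻¹ * y * b) * x.1 := by
      intro c hc x
      rw [← h x]
      have : c⁻¹ * y * c = y := by rw [mul_assoc, hc]; group
      calc _ = (b * n x)⁻¹ * (c⁻¹ * y * c) * (b * n x) := by group
        _ = _ := by rw [this]
    refine Nat.card_congr (Equiv.ofBijective (fun p => ⟨p.1.1 * b * n p.2,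
      N.mul_mem (N.mul_mem p.1.2.1 hb) (hn _), ?_⟩) ⟨?_, ?_⟩)
    · rw [conj _ p.1.2.2]
      exact M.mul_mem hz p.2.2.2.1
    · rintro ⟨c, x⟩ ⟨c', x'⟩ e
      have e' : c.1 * b * n x = c'.1 * b * n x' := congrArg Subtype.val e
      have h1 := conj _ c.2.2 x
      rw [e', conj _ c'.2.2 x'] at h1
      have hx : x = x' := Subtype.ext (mul_left_cancel h1).symm
      subst hx
      have hc : c = c' := Subtype.ext (mul_right_cancel (mul_right_cancel e'))
      rw [hc]
    · rintro ⟨a, ha, haM⟩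
      have hX : (b⁻¹ * y * b)⁻¹ * (b⁻¹ * a)⁻¹ * (b⁻¹ * y * b) * (b⁻¹ * a)
          = (b⁻¹ * y * b)⁻¹ * (a⁻¹ * y * a) := by group
      have hba : b⁻¹ * a ∈ N := N.mul_mem (N.inv_mem hb) ha
      let x : {x : G //
            (∃ n ∈ N, (b⁻¹ * y * b)⁻¹ * n⁻¹ * (b⁻¹ * y * b) * n = x) ∧
              x ∈ M ∧ x ∈ N} := ⟨(b⁻¹ * y * b)⁻¹ * (a⁻¹ * y * a), ⟨b⁻¹ * a, hba, hX⟩,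
          M.mul_mem (M.inv_mem hz) haM, by
            rw [← hX]
            refine N.mul_mem ?_ hba
            simpa using hN.conj_mem _ (N.inv_mem hba) (b⁻¹ * y * b)⁻¹⟩
      have hx : (b * n x)⁻¹ * y * (b * n x) = a⁻¹ * y * a := by
        rw [h x]
        exact mul_inv_cancel_left _ _
      refine ⟨(⟨a * (b * n x)⁻¹, N.mul_mem ha (N.inv_mem (N.mul_mem hb (hn x))), ?_⟩, x), ?_⟩
      · calc _ = a * (a⁻¹ * y * a) * (b * n x)⁻¹ := by group
          _ = _ := by rw [← hx]; group
      · apply Subtype.ext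
        change a * (b * n x)⁻¹ * b * n x = a
        group
  · intro hne
    have : IsEmpty {a : G // a ∈ N ∧ a⁻¹ * y * a ∈ M} := ⟨fun a => hne ⟨a.1, a.2⟩⟩
    exact Nat.card_of_isEmpty
end

section
/- Let V = A_1 × ⋯ × A_t with t ≥ 2, where the A_i are isomorphic finite groups, and let g be an automorphism of V that permutes the direct factors A_1, …, A_t and moves at least εt of them, where ε > 0. Let U = B_1 × ⋯ × B_t where B_i < A_i and |B_i| = |B_1| for each i, and suppose U^g = U. Then |C_V(g)| · |[g,V] ∩ U| ≤ |V| · |V:U|^{-ε/2}, where C_V(g) = {v ∈ V : v^g = v}, [g,V] = {(v^g)^{-1}v : v ∈ V}, and |V:U| is the index of U in V. -/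
/-- The `i`-th direct factor `A_i` of `V = A₁ × ⋯ × A_t`, as a subgroup of the
product: elements supported only at coordinate `i`. -/
def factorSubgroup {t : ℕ} (A : Fin t → Type*) [∀ i, Group (A i)] (i : Fin t) :
    Subgroup (∀ j, A j) :=
  Subgroup.pi Set.univ fun j => if j = i then (⊤ : Subgroup (A j)) else ⊥

lemma ccb_det {t : ℕ} (A : Fin t → Type) [∀ i, Group (A i)]
    (g : (∀ i, A i) ≃* (∀ i, A i)) (σ : Fin t → Fin t)
    (hσ : ∀ i, (factorSubgroup A i).map g.toMonoidHom = factorSubgroup A (σ i))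
    (B : ∀ i, Subgroup (A i)) (hBlt : ∀ i, B i < ⊤)
    (hU : (Subgroup.pi Set.univ B).map g.toMonoidHom = Subgroup.pi Set.univ B)
    (u : ∀ i, A i) (i : Fin t) (h : g u (σ i) ∈ B (σ i)) : u i ∈ B i := by
  classical
  have hmem : ∀ (k : Fin t) (a : A k), Pi.mulSingle k a ∈ factorSubgroup A k := by
    intro k a
    simp only [factorSubgroup, Subgroup.mem_pi]
    intro j _
    by_cases hj : j = k
    · simp [hj]
    · simp [hj]
  have hg : ∀ (k : Fin t) (a : A k) (j : Fin t), j ≠ σ k → g (Pi.mulSingle k a) j = 1 := by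
    intro k a j hj
    have h1 : g (Pi.mulSingle k a) ∈ factorSubgroup A (σ k) := by
      rw [← hσ k]
      exact ⟨_, hmem k a, rfl⟩
    simp only [factorSubgroup, Subgroup.mem_pi] at h1
    have := h1 j (Set.mem_univ _)
    simpa [hj] using this
  have hinj : Function.Injective σ := by
    intro k l hkl
    by_contra hne
    have h1 : factorSubgroup A k = factorSubgroup A l := by
      apply Subgroup.map_injective (f := g.toMonoidHom) g.injective
      rw [hσ, hσ, hkl]
    obtain ⟨a, -, ha⟩ := SetLike.exists_of_lt (hBlt k)
    have h2 := hmem k a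
    rw [h1] at h2
    simp only [factorSubgroup, Subgroup.mem_pi] at h2
    have := h2 k (Set.mem_univ _)
    simp [hne] at this
    exact ha (this ▸ (B k).one_mem)
  have hhom : ((Pi.evalMonoidHom A (σ i)).comp g.toMonoidHom) =
      ((Pi.evalMonoidHom A (σ i)).comp g.toMonoidHom).comp
        ((MonoidHom.mulSingle A i).comp (Pi.evalMonoidHom A i)) := by
    apply MonoidHom.pi_ext
    intro k a
    by_cases hk : k = i
    · subst hk
      simp
    · have h3 := hg k a (σ i) (fun h => hk (hinj h).symm)
      have h4 : (Pi.mulSingle k a : ∀ j, A j) i = 1 := by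
        rw [Pi.mulSingle_eq_of_ne (Ne.symm hk)]
      simp [h3, h4]
  have h5 : g u (σ i) = g (Pi.mulSingle i (u i)) (σ i) := DFunLike.congr_fun hhom u
  have h6 : g (Pi.mulSingle i (u i)) ∈ Subgroup.pi Set.univ B := by
    rw [Subgroup.mem_pi]
    intro j _
    by_cases hj : j = σ i
    · subst hj
      rw [← h5]; exact h
    · rw [hg i _ j hj]; exact one_mem _
  rw [← hU] at h6
  obtain ⟨w, hw, hwe⟩ := h6
  have h7 : w = Pi.mulSingle i (u i) := g.injective hwe
  subst h7
  have h8 := (Subgroup.mem_pi _).1 hw i (Set.mem_univ _)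
  simpa using h8

lemma ccb_card {t : ℕ} (A : Fin t → Type) [∀ i, Group (A i)] [∀ i, Finite (A i)]
    (g : (∀ i, A i) ≃* (∀ i, A i)) (σ : Fin t → Fin t)
    (hσ : ∀ i, (factorSubgroup A i).map g.toMonoidHom = factorSubgroup A (σ i))
    (B : ∀ i, Subgroup (A i)) (hBlt : ∀ i, B i < ⊤)
    (hU : (Subgroup.pi Set.univ B).map g.toMonoidHom = Subgroup.pi Set.univ B)
    (n : ℕ) (hn : ∀ i, (B i).index = n)
    (r : Fin t → Fin t → Prop) (hr : WellFounded r) :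
    Nat.card {v : ∀ i, A i // (g v)⁻¹ * v ∈ Subgroup.pi Set.univ B} *
      n ^ Nat.card {i // r (σ i) i} ≤ Nat.card (∀ i, A i) := by
  classical
  have hc : Nat.card (∀ i : {i // r (σ i) i}, A i ⧸ B i) = n ^ Nat.card {i // r (σ i) i} := by
    rw [Nat.card_pi]
    have : ∀ i : {i // r (σ i) i}, Nat.card (A i ⧸ B i) = n := fun i => hn i
    simp [this]
  rw [← hc, ← Nat.card_prod]
  let F : ({v : ∀ i, A i // (g v)⁻¹ * v ∈ Subgroup.pi Set.univ B} ×
      (∀ i : {i // r (σ i) i}, A i ⧸ B i)) → ∀ i, A i := fun p i =>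
    if h : r (σ i) i then
      (p.2 ⟨i, h⟩).out * (((p.1.1 i : A i ⧸ B i).out)⁻¹ * p.1.1 i) else p.1.1 i
  apply Nat.card_le_card_of_injective F
  rintro ⟨⟨v, hv⟩, c⟩ ⟨⟨w, hw⟩, d⟩ hF
  have hF' : ∀ i, F (⟨v, hv⟩, c) i = F (⟨w, hw⟩, d) i := fun i => congrFun hF i
  have hcos : ∀ i, (v i : A i ⧸ B i) = (w i : A i ⧸ B i) := by
    intro i
    induction i using hr.induction with
    | _ i ih =>
      by_cases h : r (σ i) i
      · have h1 := QuotientGroup.eq.1 (ih _ h)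
        rw [QuotientGroup.eq]
        have h2 := (Subgroup.mem_pi _).1 hv (σ i) (Set.mem_univ _)
        have h3 := (Subgroup.mem_pi _).1 hw (σ i) (Set.mem_univ _)
        apply ccb_det A g σ hσ B hBlt hU (v⁻¹ * w) i
        have h4 := mul_mem (mul_mem h2 h1) (inv_mem h3)
        simpa [mul_assoc] using h4
      · have := hF' i
        simp only [F, h, dite_false] at this
        rw [this]
  have key : ∀ i (a : A i), ((((a : A i ⧸ B i).out)⁻¹ * a : A i)) ∈ B i := by
    intro i a
    rw [← QuotientGroup.eq]
    exact Quotient.out_eq' _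
  have hcd : c = d := by
    funext ⟨i, h⟩
    have h1 := hF' i
    simp only [F, h, dite_true] at h1
    have h2 := congrArg (fun a : A i => (a : A i ⧸ B i)) h1
    rw [QuotientGroup.mk_mul_of_mem _ (key _ _), QuotientGroup.mk_mul_of_mem _ (key _ _)] at h2
    rw [← Quotient.out_eq' (c ⟨i, h⟩), ← Quotient.out_eq' (d ⟨i, h⟩)]
    exact h2
  subst hcd
  have hvw : v = w := by
    funext i
    have h1 := hF' i
    by_cases h : r (σ i) i
    · simp only [F, h, dite_true] at h1
      rw [hcos i] at h1
      simpa using h1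
    · simpa only [F, h, dite_false] using h1
  subst hvw
  rfl

lemma ccb_fib {V : Type} [Group V] [Finite V] (g : V ≃* V) (U : Subgroup V) :
    Nat.card {v : V // g v = v} *
      Nat.card {x : V // (∃ v : V, (g v)⁻¹ * v = x) ∧ x ∈ U} ≤
    Nat.card {v : V // (g v)⁻¹ * v ∈ U} := by
  rw [← Nat.card_prod]
  have hf : ∀ c v : V, g c = c → (g (c * v))⁻¹ * (c * v) = (g v)⁻¹ * v := by
    intro c v hc
    rw [map_mul, hc]; group
  apply Nat.card_le_card_of_injective
    (fun p : {v : V // g v = v} × {x : V // (∃ v : V, (g v)⁻¹ * v = x) ∧ x ∈ U} =>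
      (⟨p.1.1 * p.2.2.1.choose, by
        rw [hf _ _ p.1.2, p.2.2.1.choose_spec]; exact p.2.2.2⟩ : {v : V // (g v)⁻¹ * v ∈ U}))
  rintro ⟨⟨c, hc⟩, ⟨x, hx⟩⟩ ⟨⟨d, hd⟩, ⟨y, hy⟩⟩ h
  have h1 : c * hx.1.choose = d * hy.1.choose := congrArg Subtype.val h
  have h2 : x = y := by
    have e1 := hf c hx.1.choose hc
    have e2 := hf d hy.1.choose hd
    rw [hx.1.choose_spec] at e1
    rw [hy.1.choose_spec] at e2
    rw [← e1, ← e2, h1]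
  subst h2
  have h3 : c = d := mul_right_cancel h1
  subst h3
  rfl

/-- **Lemma 5.5(i).** Let `V = A₁ × ⋯ × A_t` (`t ≥ 2`, the `A_i` isomorphic finite
groups) and let `g` be an automorphism of `V` permuting the factors and moving at
least `εt` of them. If `U = B₁ × ⋯ × B_t` with `B_i < A_i`, `|B_i| = |B_j|`, and
`U^g = U`, then `|C_V(g)| · |[g,V] ∩ U| ≤ |V| · |V:U|^{-ε/2}`. -/
theorem centralizer_commutator_bound (t : ℕ) (ht : 2 ≤ t)
    (A : Fin t → Type) [∀ i, Group (A i)] [∀ i, Finite (A i)]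
    (hiso : ∀ i j, Nonempty (A i ≃* A j))
    (g : (∀ i, A i) ≃* (∀ i, A i))
    (hperm : ∀ i, ∃ j, (factorSubgroup A i).map g.toMonoidHom = factorSubgroup A j)
    (ε : ℝ) (hε : 0 < ε)
    (hmoves : ε * t ≤
      (Nat.card {i : Fin t // (factorSubgroup A i).map g.toMonoidHom ≠ factorSubgroup A i} : ℝ))
    (B : ∀ i, Subgroup (A i)) (hBlt : ∀ i, B i < ⊤)
    (hBcard : ∀ i j, Nat.card (B i) = Nat.card (B j))
    (hU : (Subgroup.pi Set.univ B).map g.toMonoidHom = Subgroup.pi Set.univ B) :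
    (Nat.card {v : ∀ i, A i // g v = v} : ℝ) *
      (Nat.card {x : ∀ i, A i //
        (∃ v : ∀ i, A i, (g v)⁻¹ * v = x) ∧ x ∈ Subgroup.pi Set.univ B} : ℝ) ≤
    (Nat.card (∀ i, A i) : ℝ) *
      ((Subgroup.pi Set.univ B : Subgroup (∀ i, A i)).index : ℝ) ^ (-(ε / 2)) := by
  classical
  choose σ hσ using hperm
  have hcA : ∀ i j, Nat.card (A i) = Nat.card (A j) := fun i j =>
    Nat.card_congr (hiso i j).some.toEquiv
  let i0 : Fin t := ⟨0, by omega⟩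
  obtain ⟨n, hn0⟩ : ∃ n, n = (B i0).index := ⟨_, rfl⟩
  have hn : ∀ i, (B i).index = n := by
    intro i
    have h1 := (B i).card_mul_index
    have h2 := (B i0).card_mul_index
    rw [hcA i i0, ← h2, hBcard i i0, ← hn0] at h1
    exact Nat.eq_of_mul_eq_mul_left Nat.card_pos h1
  have hnpos : 1 ≤ n := by
    rw [hn0]
    exact Nat.one_le_iff_ne_zero.2 (Subgroup.index_ne_zero_of_finite)
  have hidx : (Subgroup.pi Set.univ B : Subgroup (∀ i, A i)).index = n ^ t := by
    have h1 := (Subgroup.pi Set.univ B : Subgroup (∀ i, A i)).card_mul_index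
    have h2 : Nat.card (Subgroup.pi Set.univ B : Subgroup (∀ i, A i)) = ∏ i, Nat.card (B i) := by
      rw [← Nat.card_pi]
      exact Nat.card_congr
        { toFun := fun v i => ⟨v.1 i, (Subgroup.mem_pi _).1 v.2 i (Set.mem_univ _)⟩
          invFun := fun v => ⟨fun i => (v i).1, (Subgroup.mem_pi _).2 fun i _ => (v i).2⟩
          left_inv := fun _ => rfl
          right_inv := fun _ => rfl }
    have h3 : Nat.card (∀ i, A i) = (∏ i, Nat.card (B i)) * n ^ t := by
      rw [Nat.card_pi]
      have : ∀ i, Nat.card (A i) = Nat.card (B i) * n := fun i => by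
        rw [← hn i, (B i).card_mul_index]
      simp only [this, Finset.prod_mul_distrib]
      simp
    rw [h3, h2] at h1
    exact Nat.eq_of_mul_eq_mul_left (Finset.prod_pos fun i _ => Nat.card_pos) h1
  have hfib := ccb_fib g (Subgroup.pi Set.univ B)
  have hA := ccb_card A g σ hσ B hBlt hU n hn (· < ·) wellFounded_lt
  have hB := ccb_card A g σ hσ B hBlt hU n hn (· > ·) wellFounded_gt
  have hm : Nat.card {i : Fin t // (factorSubgroup A i).map g.toMonoidHom ≠ factorSubgroup A i} ≤
      Nat.card {i // σ i < i} + Nat.card {i // σ i > i} := by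
    rw [← Nat.card_sum]
    have hne : ∀ i : {i : Fin t //
        (factorSubgroup A i).map g.toMonoidHom ≠ factorSubgroup A i}, ¬ σ i.1 < i.1 →
        σ i.1 > i.1 := by
      intro i h
      refine lt_of_le_of_ne (not_lt.1 h) fun he => i.2 ?_
      rw [hσ, ← he]
    apply Nat.card_le_card_of_injective
      (fun i => if h : σ i.1 < i.1 then Sum.inl ⟨i.1, h⟩ else Sum.inr ⟨i.1, hne i h⟩)
    intro i j hij
    simp only at hij
    apply Subtype.ext
    split_ifs at hij
    · simpa using hij
    · simpa using hij
  obtain ⟨s, hs, hX⟩ : ∃ s : ℕ, ε * t ≤ 2 * s ∧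
      Nat.card {v : ∀ i, A i // (g v)⁻¹ * v ∈ Subgroup.pi Set.univ B} * n ^ s ≤
        Nat.card (∀ i, A i) := by
    have hm' : (Nat.card {i : Fin t //
        (factorSubgroup A i).map g.toMonoidHom ≠ factorSubgroup A i} : ℝ) ≤
      Nat.card {i // σ i < i} + Nat.card {i // σ i > i} := by exact_mod_cast hm
    rcases le_total (Nat.card {i // σ i < i}) (Nat.card {i // σ i > i}) with h | h
    · refine ⟨_, ?_, hB⟩
      have h' : (Nat.card {i // σ i < i} : ℝ) ≤ Nat.card {i // σ i > i} := by exact_mod_cast h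
      linarith
    · refine ⟨_, ?_, hA⟩
      have h' : (Nat.card {i // σ i > i} : ℝ) ≤ Nat.card {i // σ i < i} := by exact_mod_cast h
      linarith
  rw [hidx]
  have hn1 : (1 : ℝ) ≤ n := by exact_mod_cast hnpos
  have hn0' : (0 : ℝ) < n := by linarith
  have e1 : ((n : ℝ) ^ s)⁻¹ ≤ (((n ^ t : ℕ) : ℝ)) ^ (-(ε / 2)) := by
    rw [Nat.cast_pow, ← Real.rpow_natCast, ← Real.rpow_natCast, ← Real.rpow_neg hn0'.le,
      ← Real.rpow_mul hn0'.le]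
    apply Real.rpow_le_rpow_of_exponent_le hn1
    linarith
  have hfib' : (Nat.card {v : ∀ i, A i // g v = v} : ℝ) *
      (Nat.card {x : ∀ i, A i //
        (∃ v : ∀ i, A i, (g v)⁻¹ * v = x) ∧ x ∈ Subgroup.pi Set.univ B} : ℝ) ≤
      (Nat.card {v : ∀ i, A i // (g v)⁻¹ * v ∈ Subgroup.pi Set.univ B} : ℝ) := by
    exact_mod_cast hfib
  have hX' : (Nat.card {v : ∀ i, A i // (g v)⁻¹ * v ∈ Subgroup.pi Set.univ B} : ℝ) * (n : ℝ) ^ s ≤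
        (Nat.card (∀ i, A i) : ℝ) := by exact_mod_cast hX
  refine hfib'.trans (le_trans ?_ (mul_le_mul_of_nonneg_left e1 (Nat.cast_nonneg _)))
  rw [← div_eq_mul_inv, le_div_iff₀ (by positivity)]
  exact hX'
end

section
/- Let D be a natural number such that for every finite quasisimple group S and any automorphisms α_1, β_1, …, α_D, β_D of S, every element of S is a product T_{α_1,β_1}(x_1,y_1)·…·T_{α_D,β_D}(x_D,y_D) for suitable x_i, y_i ∈ S. Then for every finite quasi-semisimple group N and any 2D automorphisms α_1, β_1, …, α_D, β_D of N, the map θ : N^{2D} → N defined by θ(a_1,…,a_D,b_1,…,b_D) = ∏_{j=1}^{D} T_{α_j,β_j}(a_j,b_j) is surjective. -/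
/-- The twisted commutator `T_{α,β}(x,y) = x⁻¹y⁻¹x^α y^β`. -/
def twistedCommutator {S : Type*} [Group S] (α β : MulAut S) (x y : S) : S :=
  x⁻¹ * y⁻¹ * α x * β y


open Pointwise

/-- ordered product of the first `n` translates of `s` under `A` -/
def seqP {N : Type*} [Group N] (A : MulAut N) (s : N) : ℕ → N
  | 0 => 1
  | n + 1 => seqP A s n * (A ^ n) s

theorem map_seqP {N : Type*} [Group N] (A : MulAut N) (s : N) (n : ℕ) :
    A (seqP A s n) = s⁻¹ * seqP A s n * (A ^ n) s := by
  induction n with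
  | zero => simp [seqP]
  | succ n ih =>
    have : A ((A ^ n) s) = (A ^ (n + 1)) s := by rw [pow_succ']; rfl
    simp only [seqP, map_mul, ih, this, mul_assoc]

theorem commute_seqP {N : Type*} [Group N] (A : MulAut N) (s z : N) (n : ℕ)
    (h : ∀ q < n, Commute ((A ^ q) s) z) : Commute (seqP A s n) z := by
  induction n with
  | zero => exact Commute.one_left z
  | succ n ih =>
    exact (ih fun q hq => h q (by omega)).mul_left (h n (by omega))

theorem commute_tail_seqP {N : Type*} [Group N] (A : MulAut N) (s z : N) (n : ℕ) (hn : 0 < n)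
    (h : ∀ q, 0 < q → q < n → Commute ((A ^ q) s) z) : Commute (s⁻¹ * seqP A s n) z := by
  induction n with
  | zero => omega
  | succ n ih =>
    rcases Nat.eq_zero_or_pos n with rfl | hp
    · simp [seqP]
    · rw [seqP, ← mul_assoc]
      exact (ih hp fun q h0 hq => h q h0 (by omega)).mul_left (h n hp (by omega))

theorem handle_identity {N : Type*} [Group N] (X y Y s t w a b : N)
    (h1 : Commute y t) (h2 : Commute y X) (h3 : Commute y a) (h4 : Commute y w)
    (h5 : Commute y Y) (h6 : Commute y b) (h7 : Commute X s) (h8 : Commute X t)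
    (h9 : Commute Y s) (h10 : Commute Y t) (h11 : Commute Y a) (h12 : Commute Y w)
    (h13 : Commute w b) :
    ((s * X) * Y)⁻¹ * (t * y)⁻¹ * ((s⁻¹ * (s * X) * a) * (w⁻¹ * Y * b)) * (t⁻¹ * (t * y) * w)
      = s⁻¹ * t⁻¹ * a * b := by
  have e1 : Commute y (t⁻¹ * X * a * w⁻¹ * Y * b) :=
    ((((h1.inv_right.mul_right h2).mul_right h3).mul_right h4.inv_right).mul_right h5).mul_right h6
  have e2 : Commute X (s⁻¹ * t⁻¹) := h7.inv_right.mul_right h8.inv_right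
  have e3 : Commute Y (s⁻¹ * t⁻¹ * a * w⁻¹) :=
    ((h9.inv_right.mul_right h10.inv_right).mul_right h11).mul_right h12.inv_right
  calc _ = Y⁻¹ * X⁻¹ * s⁻¹ * y⁻¹ * ((t⁻¹ * X * a * w⁻¹ * Y * b) * y) * w := by group
    _ = Y⁻¹ * X⁻¹ * ((s⁻¹ * t⁻¹) * X) * a * w⁻¹ * Y * b * w := by rw [← e1.eq]; group
    _ = Y⁻¹ * ((s⁻¹ * t⁻¹ * a * w⁻¹) * Y) * b * w := by rw [← e2.eq]; group
    _ = s⁻¹ * t⁻¹ * a * w⁻¹ * (b * w) := by rw [← e3.eq]; group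
    _ = _ := by rw [← h13.eq]; group

theorem handle {N : Type*} [Group N] [Finite N] (𝒦 : Set (Subgroup N))
    (hc : ∀ (A : MulAut N), ∀ K ∈ 𝒦, A • K ∈ 𝒦)
    (hcomm : ∀ K ∈ 𝒦, ∀ L ∈ 𝒦, K ≠ L → ∀ x ∈ K, ∀ y ∈ L, Commute x y)
    (A B : MulAut N) (K : Subgroup N) (hK : K ∈ 𝒦) :
    ∃ A' B' : MulAut N, A' • K = K ∧ B' • K = K ∧
      ∀ s ∈ K, ∀ t ∈ K, ∃ x y : N, twistedCommutator A B x y = twistedCommutator A' B' s t := by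
  classical
  have : Finite (MulAut N) := by
    exact Finite.of_injective (fun f : MulAut N => (f : N → N)) DFunLike.coe_injective
  have exm : ∃ m, 0 < m ∧ A ^ m • K = K := ⟨orderOf A, orderOf_pos A, by simp [pow_orderOf_eq_one]⟩
  obtain ⟨m, ⟨hm0, hmK⟩, hmin⟩ : ∃ m, (0 < m ∧ A ^ m • K = K) ∧
      ∀ q, 0 < q → q < m → A ^ q • K ≠ K :=
    ⟨Nat.find exm, Nat.find_spec exm, fun q h0 hq h => Nat.find_min exm hq ⟨h0, h⟩⟩
  have exk : ∃ k, 0 < k ∧ ∃ l, 0 < l ∧ B ^ k • K = A ^ l • K :=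
    ⟨orderOf B, orderOf_pos B, orderOf A, orderOf_pos A, by simp [pow_orderOf_eq_one]⟩
  obtain ⟨k, ⟨hk0, exl⟩, hkmin⟩ : ∃ k, (0 < k ∧ ∃ l, 0 < l ∧ B ^ k • K = A ^ l • K) ∧
      ∀ p, 0 < p → p < k → ∀ q, B ^ p • K ≠ A ^ q • K := by
    refine ⟨Nat.find exk, Nat.find_spec exk, fun p h0 hp q h => Nat.find_min exk hp ⟨h0, ?_⟩⟩
    rcases Nat.eq_zero_or_pos q with rfl | hq
    · exact ⟨m, hm0, by rw [h, hmK]; simp⟩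
    · exact ⟨q, hq, h⟩
  obtain ⟨l, hl0, hlm, hlK⟩ : ∃ l, 0 < l ∧ l ≤ m ∧ B ^ k • K = A ^ l • K := by
    refine ⟨Nat.find exl, (Nat.find_spec exl).1, ?_, (Nat.find_spec exl).2⟩
    by_contra! hlt
    refine Nat.find_min exl (m := Nat.find exl - m) (by omega) ⟨by omega, ?_⟩
    have h2 := (Nat.find_spec exl).2
    generalize Nat.find exl = n at hlt h2
    obtain ⟨d, rfl⟩ := Nat.exists_eq_add_of_lt hlt
    rw [h2, show m + d + 1 - m = d + 1 by omega, show m + d + 1 = (d + 1) + m by omega,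
      pow_add, mul_smul, hmK]
  have mem : ∀ (C : MulAut N) (L : Subgroup N) (z : N), z ∈ L → C z ∈ C • L :=
    fun C L z hz => Subgroup.smul_mem_pointwise_smul z C L hz
  have hAK : ∀ q, A ^ q • K ∈ 𝒦 := fun q => hc _ _ hK
  have hmlK : A ^ (m - l) • A ^ l • K = K := by
    rw [← mul_smul, ← pow_add, show m - l + l = m by omega, hmK]
  refine ⟨A ^ m, A ^ (m - l) * B ^ k, hmK, by rw [mul_smul, hlK, hmlK], ?_⟩
  intro s hs t ht
  set w := (B ^ k) t with hw
  have hwm : w ∈ A ^ l • K := by rw [← hlK]; exact mem _ _ _ ht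
  have hAw : ∀ q, (A ^ q) w ∈ A ^ (q + l) • K := fun q => by
    rw [pow_add, mul_smul]; exact mem _ _ _ hwm
  have ha : (A ^ m) s ∈ K := by have := mem (A ^ m) K s hs; rwa [hmK] at this
  have hb : (A ^ (m - l)) w ∈ K := by
    have := mem (A ^ (m - l)) _ w hwm; rwa [hmlK] at this
  have hXK : ∀ z ∈ K, Commute (s⁻¹ * seqP A s m) z := fun z hz =>
    commute_tail_seqP A s z m hm0 fun q h0 hq =>
      hcomm _ (hAK q) _ hK (hmin q h0 hq) _ (mem _ _ _ hs) _ hz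
  have hYK : ∀ z ∈ K, Commute (seqP A w (m - l)) z := fun z hz =>
    commute_seqP A w z _ fun q hq =>
      hcomm _ (hAK _) _ hK (hmin (q + l) (by omega) (by omega)) _ (hAw q) _ hz
  have hYw : Commute (seqP A w (m - l)) w := by
    refine commute_seqP A w w _ fun q hq => ?_
    rcases Nat.eq_zero_or_pos q with rfl | hq0
    · simp
    · refine hcomm _ (hAK _) _ (hAK l) ?_ _ (hAw q) _ hwm
      rw [add_comm, pow_add, mul_smul]
      intro h
      exact hmin q hq0 (by omega) (MulAction.injective (A ^ l) h)
  have hwb : Commute w ((A ^ (m - l)) w) := by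
    rcases hlm.eq_or_lt with rfl | hlt
    · simp
    · exact hcomm _ (hAK _) _ hK (hmin l hl0 hlt) _ hwm _ hb
  have hy : ∀ q, ∀ z ∈ A ^ q • K, Commute (t⁻¹ * seqP B t k) z := fun q z hz =>
    commute_tail_seqP B t z k hk0 fun p h0 hp =>
      hcomm _ (hc _ _ hK) _ (hAK q) (hkmin p h0 hp q) _ (mem _ _ _ ht) _ hz
  have hyK : ∀ z ∈ K, Commute (t⁻¹ * seqP B t k) z := fun z hz => hy 0 z (by simpa using hz)
  have hyX : Commute (t⁻¹ * seqP B t k) (s⁻¹ * seqP A s m) := by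
    refine (hyK s hs).inv_right.mul_right (Commute.symm ?_)
    exact commute_seqP A s _ m fun q hq => (hy q _ (mem _ _ _ hs)).symm
  have hyY : Commute (t⁻¹ * seqP B t k) (seqP A w (m - l)) :=
    (commute_seqP A w _ _ fun q hq => (hy _ _ (hAw q)).symm).symm
  refine ⟨seqP A s m * seqP A w (m - l), seqP B t k, ?_⟩
  have key := handle_identity (s⁻¹ * seqP A s m) (t⁻¹ * seqP B t k) (seqP A w (m - l)) s t w
    ((A ^ m) s) ((A ^ (m - l)) w) (hyK t ht) hyX (hyK _ ha) (hy l _ hwm) hyY (hyK _ hb)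
    (hXK s hs) (hXK t ht) (hYK s hs) (hYK t ht) (hYK _ ha) hYw hwb
  simp only [mul_inv_cancel_left] at key
  unfold twistedCommutator
  rw [map_mul, map_seqP, map_seqP, map_seqP]
  exact key

theorem list_conj {N : Type*} [Group N] : ∀ (D : ℕ) (p c : Fin D → N), ∃ h : Fin D → N,
    ∀ τ : Fin D → N, (List.ofFn fun j => p j * τ j * (p j)⁻¹ * c j).prod =
      (List.ofFn fun j => h j * τ j * (h j)⁻¹).prod * (List.ofFn c).prod := by
  intro D
  induction D with
  | zero => intro p c; exact ⟨p, fun τ => by simp⟩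
  | succ D ih =>
    intro p c
    obtain ⟨h, hh⟩ := ih (fun j => p j.succ) (fun j => c j.succ)
    refine ⟨Fin.cons (p 0) (fun j => c 0 * h j), fun τ => ?_⟩
    have e : (List.ofFn fun j : Fin D => c 0 * h j * τ j.succ * (c 0 * h j)⁻¹).prod =
        c 0 * (List.ofFn fun j : Fin D => h j * τ j.succ * (h j)⁻¹).prod * (c 0)⁻¹ := by
      rw [← MulAut.conj_apply, map_list_prod, List.map_ofFn]
      congr 2
      funext j
      simp [mul_assoc]
    rw [List.ofFn_succ, List.prod_cons, hh (fun j => τ j.succ), List.ofFn_succ, List.prod_cons,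
      List.ofFn_succ (f := c), List.prod_cons]
    simp only [Fin.cons_zero, Fin.cons_succ]
    rw [e]
    group

theorem twisted_shift {N : Type*} [Group N] (A B : MulAut N) (a b X y : N) :
    twistedCommutator A B (b⁻¹ * X * b * a) (y * b) =
      (a⁻¹ * b⁻¹) * twistedCommutator (MulAut.conj (A b)⁻¹ * A) (MulAut.conj (A a) * B) X y *
        (a⁻¹ * b⁻¹)⁻¹ * twistedCommutator A B a b := by
  simp only [twistedCommutator, MulAut.mul_apply, MulAut.conj_apply, map_mul, map_inv,
    MulAut.conj_inv_apply]
  group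

theorem twisted_conj {N : Type*} [Group N] (A B φ : MulAut N) (x y : N) :
    φ (twistedCommutator A B x y) =
      twistedCommutator (φ * A * φ⁻¹) (φ * B * φ⁻¹) (φ x) (φ y) := by
  simp [twistedCommutator]

/-- restriction of an automorphism to an invariant subgroup -/
def restrictAut {N : Type*} [Group N] (A : MulAut N) (K : Subgroup N) (h : A • K = K) :
    MulAut K :=
  (MulEquiv.subgroupMap A K).trans (MulEquiv.subgroupCongr h)

theorem coe_restrictAut {N : Type*} [Group N] (A : MulAut N) (K : Subgroup N) (h : A • K = K)
    (x : K) : (restrictAut A K h x : N) = A x := rfl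

theorem absorb {N : Type*} [Group N] [Finite N] (𝒦 : Set (Subgroup N))
    (hc : ∀ (A : MulAut N), ∀ K ∈ 𝒦, A • K ∈ 𝒦)
    (hcomm : ∀ K ∈ 𝒦, ∀ L ∈ 𝒦, K ≠ L → ∀ x ∈ K, ∀ y ∈ L, Commute x y)
    (D : ℕ) (α β : Fin D → MulAut N) (K : Subgroup N) (hK : K ∈ 𝒦) (hKn : K.Normal)
    (hD : ∀ (α β : Fin D → MulAut K) (s : K),
        ∃ x y : Fin D → K,
          (List.ofFn fun i => twistedCommutator (α i) (β i) (x i) (y i)).prod = s)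
    (k : N) (hk : k ∈ K) (a b : Fin D → N) :
    ∃ x y : Fin D → N,
      (List.ofFn fun j => twistedCommutator (α j) (β j) (x j) (y j)).prod =
        k * (List.ofFn fun j => twistedCommutator (α j) (β j) (a j) (b j)).prod := by
  choose A' B' hA hB hx using fun j => handle 𝒦 hc hcomm
    (MulAut.conj (α j (b j))⁻¹ * α j) (MulAut.conj (α j (a j)) * β j) K hK
  obtain ⟨h, hh⟩ := list_conj D (fun j => (a j)⁻¹ * (b j)⁻¹)
    (fun j => twistedCommutator (α j) (β j) (a j) (b j))
  have hcK : ∀ g : N, MulAut.conj g • K = K := fun g => Subgroup.Normal.conj_smul_eq_self g K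
  have hcK' : ∀ g : N, (MulAut.conj g)⁻¹ • K = K := fun g => by
    rw [inv_smul_eq_iff, hcK]
  obtain ⟨s, t, hst⟩ := hD
    (fun j => restrictAut (MulAut.conj (h j) * A' j * (MulAut.conj (h j))⁻¹) K
      (by rw [mul_smul, mul_smul, hcK', hA, hcK]))
    (fun j => restrictAut (MulAut.conj (h j) * B' j * (MulAut.conj (h j))⁻¹) K
      (by rw [mul_smul, mul_smul, hcK', hB, hcK])) ⟨k, hk⟩
  have hinv : ∀ (g : N) (z : K), (MulAut.conj g)⁻¹ (z : N) ∈ K := fun g z => by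
    rw [← map_inv, MulAut.conj_apply]; exact hKn.conj_mem _ z.2 _
  choose X Y hXY using fun j => hx j _ (hinv (h j) (s j)) _ (hinv (h j) (t j))
  refine ⟨fun j => (b j)⁻¹ * X j * b j * a j, fun j => Y j * b j, ?_⟩
  simp only [twisted_shift, hXY]
  rw [hh]
  congr 1
  have := congrArg K.subtype hst
  rw [map_list_prod, List.map_ofFn] at this
  simp only [Subgroup.subtype_apply] at this
  rw [← this]
  congr 2
  funext j
  rw [← MulAut.conj_apply, twisted_conj]
  rw [MulAut.apply_inv_self, MulAut.apply_inv_self]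
  rfl

theorem perfect_eq_top {S : Type*} [Group S] (hS : ⁅(⊤ : Subgroup S), (⊤ : Subgroup S)⁆ = ⊤)
    (M : Subgroup S) [hM : M.Normal] (h : ∀ s : S, ∃ m ∈ M, ∃ z ∈ Subgroup.center S, s = m * z) :
    M = ⊤ := by
  rw [eq_top_iff, ← hS, Subgroup.commutator_le]
  intro g _ g' _
  obtain ⟨m, hm, z, hz, rfl⟩ := h g
  obtain ⟨m', hm', z', hz', rfl⟩ := h g'
  rw [← QuotientGroup.eq_one_iff, ← QuotientGroup.mk'_apply, map_commutatorElement, map_mul, map_mul]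
  have e1 : QuotientGroup.mk' M m = 1 := by simpa using hm
  have e2 : QuotientGroup.mk' M m' = 1 := by simpa using hm'
  rw [e1, e2, one_mul, one_mul, ← map_commutatorElement,
    commutatorElement_eq_one_iff_mul_comm.mpr ((Subgroup.mem_center_iff.mp hz' z)), map_one]

theorem quasisimple_normal {S : Type*} [Group S] (hS : IsQuasisimple S) (M : Subgroup S)
    (hM : M.Normal) : M ≤ Subgroup.center S ∨ M = ⊤ := by
  obtain ⟨h1, h2, -⟩ := hS
  have hn : (M.map (QuotientGroup.mk' (Subgroup.center S))).Normal :=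
    hM.map _ (QuotientGroup.mk'_surjective _)
  rcases hn.eq_bot_or_eq_top with h | h
  · left
    rw [Subgroup.map_eq_bot_iff, QuotientGroup.ker_mk'] at h
    exact h
  · right
    refine perfect_eq_top h1 M fun s => ?_
    have : QuotientGroup.mk' (Subgroup.center S) s ∈
      M.map (QuotientGroup.mk' (Subgroup.center S)) := by rw [h]; trivial
    obtain ⟨m, hm, e⟩ := this
    refine ⟨m, hm, m⁻¹ * s, ?_, by simp⟩
    exact QuotientGroup.eq.mp e

theorem quasisimple_not_central {S : Type*} [Group S] (hS : IsQuasisimple S) :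
    Subgroup.center S ≠ ⊤ := by
  intro h
  obtain ⟨-, -, a, b, hab⟩ := hS
  obtain ⟨a, rfl⟩ := QuotientGroup.mk_surjective a
  obtain ⟨b, rfl⟩ := QuotientGroup.mk_surjective b
  apply hab
  have : b ∈ Subgroup.center S := by rw [h]; trivial
  rw [← QuotientGroup.mk_mul, ← QuotientGroup.mk_mul, Subgroup.mem_center_iff.mp this a]

theorem comp_perfect {N : Type*} [Group N] {K : Subgroup N} (hK : IsQuasisimple K) :
    ⁅K, K⁆ = K := by
  have := congrArg (Subgroup.map K.subtype) hK.1
  rw [Subgroup.map_commutator] at this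
  simpa [← MonoidHom.range_eq_map] using this

/-- the normal quasisimple subgroups -/
def comps (N : Type*) [Group N] : Set (Subgroup N) := {K | K.Normal ∧ IsQuasisimple K}

theorem comps_le {N : Type*} [Group N] {K L : Subgroup N} (hK : K ∈ comps N)
    (hL : L ∈ comps N) (h : K ≤ L) : K = L := by
  have hKn := hK.1
  rcases quasisimple_normal hL.2 (K.subgroupOf L) inferInstance with h1 | h1
  · exfalso
    apply quasisimple_not_central hK.2
    rw [eq_top_iff]
    rintro ⟨x, hx⟩ -
    rw [Subgroup.mem_center_iff]
    rintro ⟨y, hy⟩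
    have hx' : (⟨x, h hx⟩ : L) ∈ Subgroup.center L := h1 (by simpa [Subgroup.mem_subgroupOf] using hx)
    have := Subgroup.mem_center_iff.mp hx' ⟨y, h hy⟩
    simpa [Subtype.ext_iff] using this
  · exact le_antisymm h (Subgroup.subgroupOf_eq_top.mp h1)

theorem comps_commute {N : Type*} [Group N] : ∀ K ∈ comps N, ∀ L ∈ comps N, K ≠ L →
    ∀ x ∈ K, ∀ y ∈ L, Commute x y := by
  intro K hK L hL hne
  have hKn := hK.1
  have hLn := hL.1
  have hc : ⁅⁅K, L⁆, K⁆ = ⊥ := by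
    rcases quasisimple_normal hK.2 (L.subgroupOf K) inferInstance with h1 | h1
    · rw [eq_bot_iff, Subgroup.commutator_le]
      intro g hg k hk
      have hgK : g ∈ K := Subgroup.commutator_le_left K L hg
      have hgL : g ∈ L := Subgroup.commutator_le_right K L hg
      have hx' : (⟨g, hgK⟩ : K) ∈ Subgroup.center K :=
        h1 (by simpa [Subgroup.mem_subgroupOf] using hgL)
      have := Subgroup.mem_center_iff.mp hx' ⟨k, hk⟩
      rw [Subgroup.mem_bot, commutatorElement_eq_one_iff_mul_comm]
      exact (congrArg Subtype.val this).symm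
    · exact absurd (comps_le hK hL (Subgroup.subgroupOf_eq_top.mp h1)) hne
  have h3 : ⁅⁅K, K⁆, L⁆ = ⊥ := by
    apply Subgroup.commutator_commutator_eq_bot_of_rotate hc
    rw [Subgroup.commutator_comm L K, hc]
  rw [comp_perfect hK.2] at h3
  intro x hx y hy
  exact commutatorElement_eq_one_iff_mul_comm.mp
    ((Subgroup.mem_bot).mp (h3 ▸ Subgroup.commutator_mem_commutator hx hy))

theorem IsQuasisimple.of_equiv {S S' : Type*} [Group S] [Group S'] (e : S ≃* S')
    (h : IsQuasisimple S) : IsQuasisimple S' := by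
  obtain ⟨h1, h2, a, b, hab⟩ := h
  have hz : (Subgroup.center S).map e.toMonoidHom = Subgroup.center S' := by
    ext z
    constructor
    · rintro ⟨x, hx, rfl⟩
      rw [Subgroup.mem_center_iff]
      intro g
      obtain ⟨g, rfl⟩ := e.surjective g
      have := congrArg e (Subgroup.mem_center_iff.mp hx g)
      simpa using this
    · intro hz
      refine ⟨e.symm z, ?_, by simp⟩
      refine Subgroup.mem_center_iff.mpr fun g => ?_
      apply e.injective
      simpa using Subgroup.mem_center_iff.mp hz (e g)
  let q := QuotientGroup.congr (Subgroup.center S) (Subgroup.center S') e hz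
  refine ⟨?_, q.symm.isSimpleGroup, q a, q b, ?_⟩
  · have := congrArg (Subgroup.map e.toMonoidHom) h1
    rw [Subgroup.map_commutator] at this
    rwa [Subgroup.map_top_of_surjective e.toMonoidHom e.surjective] at this
  · rw [← map_mul, ← map_mul]
    exact fun h => hab (q.injective h)

theorem comps_smul {N : Type*} [Group N] (A : MulAut N) : ∀ K ∈ comps N, A • K ∈ comps N := by
  intro K hK
  exact ⟨hK.1.map A.toMonoidHom A.surjective, IsQuasisimple.of_equiv (MulEquiv.subgroupMap A K) hK.2⟩

theorem simple_perfect {T : Type*} [Group T] (h : IsSimpleGroup T) (hn : ∃ a b : T, a * b ≠ b * a) :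
    ⁅(⊤ : Subgroup T), (⊤ : Subgroup T)⁆ = ⊤ := by
  rcases (inferInstance : (⁅(⊤ : Subgroup T), (⊤ : Subgroup T)⁆).Normal).eq_bot_or_eq_top with h | h
  · obtain ⟨a, b, hab⟩ := hn
    exact absurd (commutatorElement_eq_one_iff_mul_comm.mp ((Subgroup.mem_bot).mp
      (h ▸ Subgroup.commutator_mem_commutator (Subgroup.mem_top a) (Subgroup.mem_top b)))) hab
  · exact h

theorem simple_center {T : Type*} [Group T] (h : IsSimpleGroup T) (hn : ∃ a b : T, a * b ≠ b * a) :
    Subgroup.center T = ⊥ := by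
  rcases (inferInstance : (Subgroup.center T).Normal).eq_bot_or_eq_top with h | h
  · exact h
  · obtain ⟨a, b, hab⟩ := hn
    have : b ∈ Subgroup.center T := by rw [h]; trivial
    exact absurd (Subgroup.mem_center_iff.mp this a) hab

open scoped commutatorElement in
/-- For a central extension with a simple normal subgroup `U` of the quotient. -/
theorem comp_of_simple {N Q : Type*} [Group N] [Group Q] (f : N →* Q)
    (hf : Function.Surjective f) (hker : f.ker = Subgroup.center N) (U : Subgroup Q)
    (hU : U.Normal) (hs : IsSimpleGroup U) (hn : ∃ a b : U, a * b ≠ b * a) :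
    ∃ K ∈ comps N, K.map f = U := by
  set P := U.comap f with hP
  have hPn : P.Normal := hU.comap f
  have hUU : ⁅U, U⁆ = U := by
    have := congrArg (Subgroup.map U.subtype) (simple_perfect hs hn)
    rw [Subgroup.map_commutator] at this
    simpa [← MonoidHom.range_eq_map] using this
  have hmap : (⁅P, P⁆).map f = U := by
    rw [Subgroup.map_commutator, Subgroup.map_comap_eq_self_of_surjective hf, hUU]
  have hdec : ∀ p ∈ P, ∃ k ∈ ⁅P, P⁆, ∃ z ∈ Subgroup.center N, p = k * z := by
    intro p hp
    have : f p ∈ (⁅P, P⁆).map f := by rw [hmap]; exact hp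
    obtain ⟨k, hk, e⟩ := this
    refine ⟨k, hk, k⁻¹ * p, ?_, by simp⟩
    rw [← hker, MonoidHom.mem_ker, map_mul, map_inv, e, inv_mul_cancel]
  have hperf : ⁅⁅P, P⁆, ⁅P, P⁆⁆ = ⁅P, P⁆ := by
    apply le_antisymm (Subgroup.commutator_le_left _ _)
    rw [Subgroup.commutator_le]
    intro g hg g' hg'
    obtain ⟨m, hm, z, hz, rfl⟩ := hdec g hg
    obtain ⟨m', hm', z', hz', rfl⟩ := hdec g' hg'
    have e : ⁅m * z, m' * z'⁆ = ⁅m, m'⁆ := by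
      have c1 : ∀ x, Commute z x := fun x => (Subgroup.mem_center_iff.mp hz x).symm
      have c2 : ∀ x, Commute z' x := fun x => (Subgroup.mem_center_iff.mp hz' x).symm
      rw [commutatorElement_def, commutatorElement_def, mul_inv_rev, mul_inv_rev]
      calc m * z * (m' * z') * (z⁻¹ * m⁻¹) * (z'⁻¹ * m'⁻¹)
          = m * (z * (m' * z')) * z⁻¹ * m⁻¹ * z'⁻¹ * m'⁻¹ := by group
        _ = m * m' * (z' * m⁻¹) * z'⁻¹ * m'⁻¹ := by rw [(c1 _).eq]; group
        _ = _ := by rw [(c2 _).eq]; group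
    rw [e]
    exact Subgroup.commutator_mem_commutator hm hm'
  refine ⟨⁅P, P⁆, ⟨inferInstance, ?_⟩, hmap⟩
  generalize ⁅P, P⁆ = K at hmap hperf
  let g : K →* U := (f.comp K.subtype).codRestrict U
    (fun k => by rw [← hmap]; exact Subgroup.mem_map_of_mem f k.2)
  have hg : Function.Surjective g := by
    rintro ⟨u, hu⟩
    rw [← hmap] at hu
    obtain ⟨k, hk, e⟩ := hu
    exact ⟨⟨k, hk⟩, Subtype.ext e⟩
  have hgk : g.ker = Subgroup.center K := by
    ext k
    rw [MonoidHom.mem_ker]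
    constructor
    · intro hk
      have h1 : f k = 1 := congrArg Subtype.val hk
      have h2 : (k : N) ∈ Subgroup.center N := by rw [← hker]; exact h1
      rw [Subgroup.mem_center_iff]
      intro x
      exact Subtype.ext (Subgroup.mem_center_iff.mp h2 x)
    · intro hk
      have : g k ∈ Subgroup.center U := by
        rw [Subgroup.mem_center_iff]
        intro u
        obtain ⟨u, rfl⟩ := hg u
        rw [← map_mul, ← map_mul, Subgroup.mem_center_iff.mp hk u]
      rw [simple_center hs hn] at this
      exact this
  let q : (K ⧸ Subgroup.center K) ≃* U :=
    (QuotientGroup.quotientMulEquivOfEq hgk.symm).trans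
      (QuotientGroup.quotientKerEquivOfSurjective g hg)
  obtain ⟨a, b, hab⟩ := hn
  refine ⟨?_, q.isSimpleGroup, q.symm a, q.symm b, ?_⟩
  · apply Subgroup.map_injective K.subtype_injective
    rw [Subgroup.map_commutator]
    simpa [← MonoidHom.range_eq_map] using hperf
  · rw [← map_mul, ← map_mul]
    exact fun h => hab (q.symm.injective h)

theorem comps_sSup {N : Type} [Group N] [Finite N] (hN : IsQuasiSemisimple N) :
    sSup (comps N) = ⊤ := by
  classical
  obtain ⟨hp, ι, T, instT, hT, ⟨e⟩⟩ := hN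
  have hfin : Finite ((i : ι) → T i) := Finite.of_equiv _ e.toEquiv
  have hι : Finite ι := by
    choose a b hab using fun i => (hT i).2
    have ha : ∀ i, a i ≠ 1 := fun i h => hab i (by rw [h]; simp)
    refine Finite.of_injective (fun i => (Pi.mulSingle i (a i) : (i : ι) → T i)) ?_
    intro i j hij
    by_contra hne
    have := congrFun hij i
    simp only [Pi.mulSingle_eq_same, Pi.mulSingle_eq_of_ne hne] at this
    exact ha i this
  let f : N →* ((i : ι) → T i) := e.toMonoidHom.comp (QuotientGroup.mk' (Subgroup.center N))
  have hf : Function.Surjective f := e.surjective.comp (QuotientGroup.mk'_surjective _)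
  have hker : f.ker = Subgroup.center N := by
    ext x
    simp [f]
  have hnorm : (sSup (comps N)).Normal := by
    rw [sSup_eq_iSup']
    have : ∀ i : comps N, (i : Subgroup N).Normal := fun i => i.2.1
    infer_instance
  have hmap : (sSup (comps N)).map f = ⊤ := by
    rw [eq_top_iff]
    intro x _
    apply Subgroup.pi_mem_of_mulSingle_mem
    intro i
    let s : T i ≃* (MonoidHom.mulSingle T i).range :=
      MonoidHom.ofInjective (Pi.mulSingle_injective i)
    have := (hT i).1
    obtain ⟨a, b, hab⟩ := (hT i).2
    have hnn : (MonoidHom.mulSingle T i).range.Normal := by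
      constructor
      rintro _ ⟨t, rfl⟩ g
      refine ⟨g i * t * (g i)⁻¹, ?_⟩
      funext j
      rcases eq_or_ne j i with rfl | hj
      · simp
      · simp [Pi.mulSingle_eq_of_ne hj]
    obtain ⟨K, hK, hKm⟩ := comp_of_simple f hf hker (MonoidHom.mulSingle T i).range hnn
      s.symm.isSimpleGroup
      ⟨s a, s b, by rw [← map_mul, ← map_mul]; exact fun h => hab (s.injective h)⟩
    apply Subgroup.map_mono (le_sSup hK)
    rw [hKm]
    exact ⟨x i, rfl⟩
  refine perfect_eq_top hp _ fun s => ?_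
  have : f s ∈ (sSup (comps N)).map f := by rw [hmap]; trivial
  obtain ⟨m, hm, e⟩ := this
  refine ⟨m, hm, m⁻¹ * s, ?_, by simp⟩
  rw [← hker, MonoidHom.mem_ker, map_mul, map_inv, e, inv_mul_cancel]

/-- **Proposition 11.1.** Suppose `D` is such that in every finite quasisimple group,
every element is a product of `D` twisted commutators with respect to any prescribed
automorphisms. Then for every finite quasi-semisimple group `N` and any automorphisms
`α₁,β₁,…,α_D,β_D` of `N`, the map
`θ(a,b) = ∏_{j=1}^{D} T_{α_j,β_j}(a_j,b_j)` from `N^{2D}` to `N` is surjective. -/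
theorem quasisemisimple_twisted_commutators (D : ℕ)
    (hD : ∀ (S : Type) [Group S] [Finite S], IsQuasisimple S →
      ∀ (α β : Fin D → MulAut S) (s : S),
        ∃ x y : Fin D → S,
          (List.ofFn fun i => twistedCommutator (α i) (β i) (x i) (y i)).prod = s)
    (N : Type) [Group N] [Finite N] (hN : IsQuasiSemisimple N)
    (α β : Fin D → MulAut N) :
    Function.Surjective (fun ab : (Fin D → N) × (Fin D → N) =>
      (List.ofFn fun j => twistedCommutator (α j) (β j) (ab.1 j) (ab.2 j)).prod) := by
  let Im : Set N := Set.range (fun ab : (Fin D → N) × (Fin D → N) =>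
      (List.ofFn fun j => twistedCommutator (α j) (β j) (ab.1 j) (ab.2 j)).prod)
  have hmul : ∀ K ∈ comps N, ∀ k ∈ K, ∀ g ∈ Im, k * g ∈ Im := by
    rintro K hK k hk _ ⟨⟨a, b⟩, rfl⟩
    obtain ⟨x, y, hxy⟩ := absorb (comps N) comps_smul comps_commute D α β K hK hK.1
      (hD K hK.2) k hk a b
    exact ⟨(x, y), hxy⟩
  have h1 : (1 : N) ∈ Im := by
    refine ⟨(1, 1), ?_⟩
    simp [twistedCommutator, List.ofFn_const]
  let H : Subgroup N :=
    { carrier := {k | (∀ g ∈ Im, k * g ∈ Im) ∧ ∀ g ∈ Im, k⁻¹ * g ∈ Im}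
      one_mem' := by simp
      mul_mem' := by
        rintro a b ⟨ha, ha'⟩ ⟨hb, hb'⟩
        refine ⟨fun g hg => ?_, fun g hg => ?_⟩
        · rw [mul_assoc]; exact ha _ (hb _ hg)
        · rw [mul_inv_rev, mul_assoc]; exact hb' _ (ha' _ hg)
      inv_mem' := by
        rintro a ⟨ha, ha'⟩
        exact ⟨ha', by simpa using ha⟩ }
  have hH : H = ⊤ := by
    rw [eq_top_iff, ← comps_sSup hN]
    exact sSup_le fun K hK k hk => ⟨hmul K hK k hk, hmul K hK _ (K.inv_mem hk)⟩
  intro g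
  have hg : g ∈ H := by rw [hH]; trivial
  have := hg.1 1 h1
  rwa [mul_one] at this
end
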